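/- arXiv:math/0407174 — 2 statements merged into one kernel-verified Lean document; each statement's English description precedes it below -/
import Mathlib

section
/- A real number α belongs to F_{√(1+x²)} if and only if α belongs to F_{√x} and α is totally real. -/
/-!
A totally real square root of `1 + x²` with `x` totally real is again totally real, because every
conjugate of it squares to a positive real number; this gives one direction.

For the other, let `K ⊆ ℝ` be closed under `x ↦ √(1 + x²)`, so that sums of squares in `K` are
squares, and let `x` be totally real with `x² ∈ K`. All conjugates of `-x²` are nonpositive, so its
minimal polynomial has nonnegative coefficients, and separating even and odd powers in it writes
`x²` as a quotient of sums of squares in `K`. Hence `x ∈ K`: a totally real square root of an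
element of `K` costs nothing.

It remains to reach `α` from `ℚ` by totally real square roots. Every element of `F_{√x}` is fixed by
`σ ^ 2 ^ k` for some `k` and all `σ` in the absolute Galois group, since `σ z² = z²` forces
`σ z = ± z`. So the Galois closure of `ℚ(α)`, which is totally real, has a 2-group as Galois group,
and such an extension is a tower of quadratic extensions.
-/

open Polynomial

/-- A complex number is *totally real* if it is algebraic over ℚ and every complex
root of its minimal polynomial over ℚ is a real number. -/
def IsTotallyReal (α : ℂ) : Prop :=
  IsAlgebraic ℚ α ∧ ∀ z : ℂ, aeval z (minpoly ℚ α) = 0 → z.im = 0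

/-- Membership in `F_{√(1+x²)}`, the smallest subfield of ℝ closed under
`x ↦ √(1+x²)`. -/
def MemFSqrtOneAddSq (α : ℝ) : Prop :=
  ∀ K : Subfield ℝ, (∀ x ∈ K, Real.sqrt (1 + x ^ 2) ∈ K) → α ∈ K

/-- Membership in `F_{√x}`, the smallest subfield of ℂ closed under taking
square roots. -/
def MemFSqrt (α : ℂ) : Prop :=
  ∀ L : Subfield ℂ, (∀ z : ℂ, z ^ 2 ∈ L → z ∈ L) → α ∈ L

section SumOfSquares

lemma isSumSq_inv {K : Type*} [Semifield K] {a : K} (ha : IsSumSq a) : IsSumSq a⁻¹ := by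
  rcases eq_or_ne a 0 with rfl | h
  · simp
  · have : a⁻¹ = a * (a⁻¹ * a⁻¹) := by field_simp
    exact this ▸ ha.mul (.mul_self _)

lemma isSumSq_div {K : Type*} [Semifield K] {a b : K} (ha : IsSumSq a) (hb : IsSumSq b) :
    IsSumSq (a / b) :=
  div_eq_mul_inv a b ▸ ha.mul (isSumSq_inv hb)

variable {K : Type*} [Field K] {a : K}

lemma isSumSq_ratCast {q : ℚ} (hq : 0 ≤ q) : IsSumSq (q : K) := by
  rw [Rat.cast_def, ← Int.toNat_of_nonneg (Rat.num_nonneg.2 hq), Int.cast_natCast]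
  exact isSumSq_div (.natCast _) (.natCast _)

variable (K) in
/-- A *Pythagorean* field: every element `1 + x ^ 2` is a square. Equivalently, every sum of squares
is a square. -/
def IsPythagorean : Prop := ∀ x : K, IsSquare (1 + x ^ 2)

lemma IsPythagorean.isSquare_of_isSumSq (hK : IsPythagorean K) (ha : IsSumSq a) : IsSquare a := by
  induction ha with
  | zero => exact .zero
  | @sq_add a s _ hs =>
    obtain ⟨b, rfl⟩ := hs
    rcases eq_or_ne a 0 with rfl | ha
    · simp
    · have : a * a + b * b = a * a * (1 + (b / a) ^ 2) := by field_simp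
      exact this ▸ (IsSquare.mul_self a).mul (hK _)

end SumOfSquares

section Coefficients

lemma isSumSq_eval {R : Type*} [CommSemiring R] {p : R[X]} {x : R}
    (hp : ∀ i, IsSumSq (p.coeff i)) (hx : IsSumSq x) : IsSumSq (p.eval x) := by
  rw [eval_eq_sum_range]
  refine .sum fun i _ => (hp i).mul ?_
  exact Subsemiring.mem_sumSq.1 (pow_mem (Subsemiring.mem_sumSq.2 hx) i)

lemma eq_zero_of_isRoot_of_coeff_nonneg {R : Type*} [CommSemiring R] [PartialOrder R]
    [IsStrictOrderedRing R] {p : R[X]} {x : R} (hp : ∀ i, 0 ≤ p.coeff i) (hx : 0 < x)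
    (h : p.IsRoot x) : p = 0 := by
  by_contra hp0
  rw [IsRoot.def, eval_eq_sum_range] at h
  refine (Finset.sum_pos' (fun i _ => mul_nonneg (hp i) (pow_nonneg hx.le i))
    ⟨p.natDegree, by simp, mul_pos ?_ (pow_pos hx _)⟩).ne' h
  exact (hp _).lt_of_ne' (leadingCoeff_ne_zero.2 hp0)

lemma expand_contract_two_add_X_mul {R : Type*} [CommSemiring R] (p : R[X]) :
    expand R 2 (contract 2 p) + X * expand R 2 (contract 2 p.divX) = p := by
  ext n
  obtain ⟨m, rfl | rfl⟩ := n.even_or_odd'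
  · have hodd : (X * expand R 2 (contract 2 p.divX)).coeff (2 * m) = 0 := by
      cases m with
      | zero => simp
      | succ m =>
        rw [show 2 * (m + 1) = 2 * m + 1 + 1 by ring, coeff_X_mul, coeff_expand two_pos,
          if_neg (by lia)]
    rw [coeff_add, hodd, add_zero, coeff_expand_mul' two_pos, coeff_contract two_ne_zero, mul_comm]
  · rw [coeff_add, coeff_X_mul, coeff_expand_mul' two_pos, coeff_contract two_ne_zero, mul_comm m,
      coeff_divX, coeff_expand two_pos, if_neg (by lia), zero_add]

/-- Split the equation `p(x) = 0` as `E(x²) + x * O(x²) = 0`: this expresses `-x` as a quotient of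
sums of squares. -/
lemma isSumSq_neg_of_isRoot {K : Type*} [Field K] [LinearOrder K] [IsStrictOrderedRing K]
    {p : K[X]} {x : K} (hp0 : p ≠ 0) (hp : ∀ i, IsSumSq (p.coeff i)) (hx : p.IsRoot x) :
    IsSumSq (-x) := by
  rcases eq_or_ne x 0 with rfl | hx0
  · simp
  set E := contract 2 p
  set O := contract 2 p.divX
  have hsplit : expand K 2 E + X * expand K 2 O = p := expand_contract_two_add_X_mul p
  have hE : ∀ i, IsSumSq (E.coeff i) := fun i => by simpa [E, coeff_contract] using hp _
  have hO : ∀ i, IsSumSq (O.coeff i) := fun i => by simpa [O, coeff_contract] using hp _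
  have hroot : E.eval (x ^ 2) + x * O.eval (x ^ 2) = 0 := by
    simpa [← hsplit, expand_eval] using hx
  have hO0 : O.eval (x ^ 2) ≠ 0 := by
    intro h
    have hxpos : 0 < x ^ 2 := by positivity
    have hEzero := eq_zero_of_isRoot_of_coeff_nonneg (fun i => (hE i).nonneg) hxpos
      (by simpa [h] using hroot)
    have hOzero := eq_zero_of_isRoot_of_coeff_nonneg (fun i => (hO i).nonneg) hxpos h
    exact hp0 (by simp [← hsplit, hEzero, hOzero])
  have hquot : -x = E.eval (x ^ 2) / O.eval (x ^ 2) := by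
    field_simp
    linear_combination -hroot
  have hsq : IsSumSq (x ^ 2) := (IsSquare.sq x).isSumSq
  exact hquot ▸ isSumSq_div (isSumSq_eval hE hsq) (isSumSq_eval hO hsq)

lemma coeff_nonneg_of_roots_nonpos {R : Type*} [CommRing R] [IsDomain R] [PartialOrder R]
    [IsOrderedRing R] {p : R[X]} (hsplits : p.Splits) (hlead : 0 ≤ p.leadingCoeff)
    (hroots : ∀ r ∈ p.roots, r ≤ 0) (i : ℕ) : 0 ≤ p.coeff i := by
  have hprod : ∀ i, 0 ≤ ((p.roots.map (X - C ·)).prod).coeff i := by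
    refine Multiset.prod_induction (fun q : R[X] => ∀ i, 0 ≤ q.coeff i) _ ?_ ?_ ?_
    · intro f g hf hg i
      rw [coeff_mul]
      exact Finset.sum_nonneg fun j _ => mul_nonneg (hf _) (hg _)
    · intro i
      rw [coeff_one]
      split_ifs <;> simp
    · intro q hq i
      obtain ⟨r, hr, rfl⟩ := Multiset.mem_map.1 hq
      rcases i with _ | i
      · simpa using hroots r hr
      · simp only [coeff_sub, coeff_X, coeff_C_succ, sub_zero]
        split_ifs <;> simp
  rw [hsplits.eq_prod_roots, coeff_C_mul]
  exact mul_nonneg hlead (hprod i)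

end Coefficients

section QuadraticTowers

open IntermediateField

lemma exists_subgroup_index_eq_prime {G : Type*} [Group G] [Finite G] [Nontrivial G] {p : ℕ}
    [Fact p.Prime] (hG : IsPGroup p G) : ∃ H : Subgroup G, H.index = p := by
  obtain ⟨n, hn, hcard⟩ := hG.nontrivial_iff_card.1 ‹_›
  obtain ⟨m, rfl⟩ := Nat.exists_eq_add_of_lt hn
  rw [zero_add] at hcard
  obtain ⟨H, hH⟩ := Sylow.exists_subgroup_card_pow_prime p (hcard ▸ pow_dvd_pow p m.le_succ)
  refine ⟨H, Nat.eq_of_mul_eq_mul_left (Nat.card_pos (α := H)) ?_⟩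
  rw [H.card_mul_index, hcard, hH, pow_succ]

variable {F E : Type*} [Field F] [NeZero (2 : F)] [Field E] [Algebra F E] [FiniteDimensional F E]
  [IsGalois F E]

lemma exists_sq_mem_bot_notMem_bot [Nontrivial Gal(E/F)] (hG : IsPGroup 2 Gal(E/F)) :
    ∃ y : E, y ^ 2 ∈ (⊥ : IntermediateField F E) ∧ y ∉ (⊥ : IntermediateField F E) := by
  obtain ⟨H, hH⟩ := exists_subgroup_index_eq_prime hG
  let Q := fixedField H
  have hQ : Module.finrank F Q = 2 := by
    rw [finrank_eq_fixingSubgroup_index, fixingSubgroup_fixedField, hH]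
  have : Algebra.IsQuadraticExtension F Q := { finrank_eq_two' := hQ }
  have hchar : ringChar F ≠ 2 := fun h =>
    two_ne_zero (α := F) (by exact_mod_cast h ▸ ringChar.Nat.cast_ringChar (R := F))
  have hprim : (primitiveRoots (Module.finrank F Q) F).Nonempty :=
    ⟨-1, (mem_primitiveRoots Module.finrank_pos).2 (hQ.symm ▸ .neg_one (ringChar F) hchar)⟩
  obtain ⟨y, ⟨c, hc⟩, hy⟩ := exists_root_adjoin_eq_top_of_isCyclic F Q hprim
  rw [hQ] at hc
  refine ⟨y, ⟨c, congrArg Subtype.val hc⟩, fun ⟨d, hd⟩ => ?_⟩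
  have hbot : (⊥ : IntermediateField F Q) = ⊤ := by
    rw [← hy, eq_comm, adjoin_simple_eq_bot_iff]
    exact ⟨d, Subtype.ext hd⟩
  have := bot_eq_top_iff_finrank_eq_one.1 hbot
  lia

lemma eq_top_of_forall_sq_mem (hG : IsPGroup 2 Gal(E/F)) {M : IntermediateField F E}
    (hM : ∀ y : E, y ^ 2 ∈ M → y ∈ M) : M = ⊤ := by
  have : NeZero (2 : M) := ⟨map_ofNat (algebraMap F M) 2 ▸ (_root_.map_ne_zero _).2 two_ne_zero⟩
  have hGM : IsPGroup 2 Gal(E/M) :=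
    (hG.to_subgroup M.fixingSubgroup).of_equiv (fixingSubgroupEquiv M)
  by_contra hne
  have : Nontrivial Gal(E/M) := by
    rw [← Finite.one_lt_card_iff_nontrivial, IsGalois.card_aut_eq_finrank]
    have := Module.finrank_pos (R := M) (M := E)
    have : Module.finrank M E ≠ 1 := mt finrank_eq_one_iff_eq_top.1 hne
    lia
  obtain ⟨y, hy, hyM⟩ := exists_sq_mem_bot_notMem_bot hGM
  obtain ⟨c, hc⟩ := mem_bot.1 hy
  exact hyM (mem_bot.2 ⟨⟨y, hM y (hc ▸ c.2)⟩, rfl⟩)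

end QuadraticTowers

section ProPClosure

open IntermediateField

variable {F A : Type*} [Field F] [Field A] [Algebra F A] {p k : ℕ} {z : A}

lemma apply_pow_pow_add (h : ∀ σ : Gal(A/F), (σ ^ p ^ k) z = z) (l : ℕ) (σ : Gal(A/F)) :
    (σ ^ p ^ (k + l)) z = z := by
  rw [add_comm, pow_add, pow_mul]
  exact h _

variable (F A p) in
/-- The elements of `A` fixed by `σ ^ p ^ k` for some `k` and all automorphisms `σ`. When `A` is
Galois over `F`, this is the maximal pro-`p` subextension, that is, the union of the finite Galois
subextensions whose Galois group is a `p`-group; with the present description it is visibly a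
field. -/
def proPClosure : IntermediateField F A where
  carrier := {z | ∃ k : ℕ, ∀ σ : Gal(A/F), (σ ^ p ^ k) z = z}
  mul_mem' := by
    rintro a b ⟨k, ha⟩ ⟨l, hb⟩
    refine ⟨k + l, fun σ => ?_⟩
    rw [map_mul, apply_pow_pow_add ha, add_comm, apply_pow_pow_add hb]
  add_mem' := by
    rintro a b ⟨k, ha⟩ ⟨l, hb⟩
    refine ⟨k + l, fun σ => ?_⟩
    rw [map_add, apply_pow_pow_add ha, add_comm k l, apply_pow_pow_add hb]
  algebraMap_mem' r := ⟨0, fun σ => σ.commutes r⟩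
  inv_mem' := by
    rintro a ⟨k, ha⟩
    exact ⟨k, fun σ => by rw [map_inv₀, ha]⟩

lemma mem_proPClosure : z ∈ proPClosure F A p ↔ ∃ k : ℕ, ∀ σ : Gal(A/F), (σ ^ p ^ k) z = z :=
  Iff.rfl

lemma mem_proPClosure_two_of_sq_mem (hz : z ^ 2 ∈ proPClosure F A 2) : z ∈ proPClosure F A 2 := by
  obtain ⟨k, hk⟩ := mem_proPClosure.1 hz
  refine ⟨k + 1, fun σ => ?_⟩
  rw [pow_succ, pow_mul, sq, AlgEquiv.mul_apply]
  have h := hk σ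
  rw [map_pow, sq_eq_sq_iff_eq_or_eq_neg] at h
  rcases h with h | h
  · rw [h, h]
  · rw [h, map_neg, h, neg_neg]

instance normal_proPClosure [Normal F A] : Normal F (proPClosure F A p) := by
  rw [normal_iff_forall_map_le']
  rintro τ _ ⟨z, ⟨k, hk⟩, rfl⟩
  refine ⟨k, fun σ => ?_⟩
  have hconj : σ ^ p ^ k * τ = τ * (τ⁻¹ * σ * τ) ^ p ^ k := by
    have := conj_pow (i := p ^ k) (a := τ⁻¹) (b := σ)
    rw [inv_inv] at this
    rw [this]
    group
  exact (DFunLike.congr_fun hconj z).trans (congrArg τ (hk _))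

lemma isPGroup_of_le_proPClosure [Normal F A] {E : IntermediateField F A} [FiniteDimensional F E]
    [IsGalois F E] (hE : E ≤ proPClosure F A p) : IsPGroup p Gal(E/F) := by
  intro τ
  obtain ⟨σ, rfl⟩ := AlgEquiv.restrictNormalHom_surjective (K₁ := E) A τ
  obtain ⟨b, hb⟩ := Field.exists_primitive_element F E
  obtain ⟨k, hk⟩ := hE b.2
  refine ⟨k, ?_⟩
  have hfix : AlgEquiv.restrictNormalHom E (σ ^ p ^ k) b = b :=
    Subtype.ext ((AlgEquiv.restrictNormal_commutes _ E b).trans (hk σ))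
  rw [← map_pow, ← Subgroup.mem_bot, ← fixingSubgroup_top, ← hb,
    IntermediateField.mem_fixingSubgroup_iff]
  refine (forall_mem_adjoin_smul_eq_self_iff F (S := {b})
    (AlgEquiv.restrictNormalHom E (σ ^ p ^ k))).2 ?_
  rintro _ rfl
  exact hfix

lemma inf_proPClosure_two_le [NeZero (2 : F)] [IsGalois F A] {P M : IntermediateField F A}
    (hP : ∀ σ : Gal(A/F), ∀ x ∈ P, σ x ∈ P) (hM : ∀ y ∈ P, y ^ 2 ∈ M → y ∈ M) :
    P ⊓ proPClosure F A 2 ≤ M := by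
  intro a ha
  have : Normal F P := by
    rw [normal_iff_forall_map_le']
    rintro σ _ ⟨x, hx, rfl⟩
    exact hP σ x hx
  let E := normalClosure F F⟮a⟯ A
  have hE : E ≤ P ⊓ proPClosure F A 2 := by
    rwa [normalClosure_le_iff_of_normal, adjoin_simple_le_iff]
  have : FiniteDimensional F F⟮a⟯ := adjoin.finiteDimensional (Normal.isIntegral inferInstance a)
  have : FiniteDimensional F E := normalClosure.is_finiteDimensional F _ A
  have : IsGalois F E := { }
  have htop : M.comap E.val = ⊤ :=
    eq_top_of_forall_sq_mem (isPGroup_of_le_proPClosure (hE.trans inf_le_right))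
      fun y hy => hM y (hE y.2).1 hy
  have haE : a ∈ E := le_normalClosure _ (mem_adjoin_simple_self F a)
  have haM : (⟨a, haE⟩ : E) ∈ M.comap E.val := htop ▸ mem_top
  exact haM

end ProPClosure

section TotallyReal

open NumberField (maximalRealSubfield)
open scoped ComplexOrder

variable {A : Type*} [Field A]

lemma mem_maximalRealSubfield_iff_im_eq_zero {a : A} :
    a ∈ maximalRealSubfield A ↔ ∀ ψ : A →+* ℂ, (ψ a).im = 0 :=
  forall_congr' fun _ => Complex.conj_eq_iff_im

lemma mem_maximalRealSubfield_of_sq_eq_one_add_sq {a b : A} (ha : a ∈ maximalRealSubfield A)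
    (hb : b ^ 2 = 1 + a ^ 2) : b ∈ maximalRealSubfield A := by
  rw [mem_maximalRealSubfield_iff_im_eq_zero] at ha ⊢
  intro ψ
  rw [← Complex.sq_nonneg_iff, ← map_pow, hb, map_add, map_one, map_pow]
  exact add_nonneg zero_le_one (Complex.sq_nonneg_iff.2 (ha ψ))

variable [Algebra ℚ A]

variable (A) in
/-- The maximal totally real subfield of `A`, as an extension of `ℚ`. -/
def totallyRealField : IntermediateField ℚ A :=
  (maximalRealSubfield A).toIntermediateField fun q => by simp

variable [Algebra.IsAlgebraic ℚ A] {a : A}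

lemma exists_ringHom_apply_eq_of_aeval_minpoly_eq_zero {z : ℂ} (hz : aeval z (minpoly ℚ a) = 0) :
    ∃ ψ : A →+* ℂ, ψ a = z := by
  have hz' : z ∈ (minpoly ℚ a).rootSet ℂ :=
    mem_rootSet.2 ⟨minpoly.ne_zero (Algebra.IsIntegral.isIntegral a), hz⟩
  rw [← Algebra.IsAlgebraic.range_eval_eq_rootSet_minpoly] at hz'
  obtain ⟨ψ, hψ⟩ := hz'
  exact ⟨ψ, hψ⟩

lemma isTotallyReal_apply_iff (φ : A →+* ℂ) :
    IsTotallyReal (φ a) ↔ a ∈ maximalRealSubfield A := by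
  have hmin : minpoly ℚ (φ a) = minpoly ℚ a := minpoly.algHom_eq φ.toRatAlgHom φ.injective a
  rw [mem_maximalRealSubfield_iff_im_eq_zero, IsTotallyReal, hmin]
  constructor
  · rintro ⟨-, h⟩ ψ
    refine h (ψ a) ?_
    exact (aeval_algHom_apply ψ.toRatAlgHom a _).trans (by simp)
  · refine fun h => ⟨(Algebra.IsAlgebraic.isAlgebraic a).algHom φ.toRatAlgHom, fun z hz => ?_⟩
    obtain ⟨ψ, rfl⟩ := exists_ringHom_apply_eq_of_aeval_minpoly_eq_zero hz
    exact h ψ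

lemma coeff_minpoly_neg_sq_nonneg (ha : a ∈ maximalRealSubfield A) (i : ℕ) :
    0 ≤ (minpoly ℚ (-a ^ 2)).coeff i := by
  have hmonic : (minpoly ℚ (-a ^ 2)).Monic := minpoly.monic (Algebra.IsIntegral.isIntegral _)
  have hroots : ∀ z ∈ ((minpoly ℚ (-a ^ 2)).map (algebraMap ℚ ℂ)).roots, z ≤ 0 := by
    intro z hz
    obtain ⟨ψ, rfl⟩ := exists_ringHom_apply_eq_of_aeval_minpoly_eq_zero
      ((eval_map_algebraMap _ z).symm.trans (isRoot_of_mem_roots hz))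
    rw [map_neg, map_pow, neg_nonpos, Complex.sq_nonneg_iff]
    exact mem_maximalRealSubfield_iff_im_eq_zero.1 ha ψ
  have hcoeff := coeff_nonneg_of_roots_nonpos (IsAlgClosed.splits _)
    (by simp [hmonic.leadingCoeff]) hroots i
  rw [coeff_map, eq_ratCast, ← Complex.ofReal_ratCast, Complex.zero_le_real] at hcoeff
  exact_mod_cast hcoeff

lemma IsPythagorean.mem_fieldRange_of_sq_mem {K B : Type*} [Field K] [LinearOrder K]
    [IsStrictOrderedRing K] [Field B] (hK : IsPythagorean K) (ι : K →+* B) (φ : A →+* B)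
    (ha : a ∈ maximalRealSubfield A) (h : φ a ^ 2 ∈ ι.fieldRange) : φ a ∈ ι.fieldRange := by
  obtain ⟨c, hc⟩ := h
  have hroot : ((minpoly ℚ (-a ^ 2)).map (algebraMap ℚ K)).IsRoot (-c) := by
    rw [IsRoot.def, ← map_eq_zero ι, eval_map, hom_eval₂, map_neg, hc, ← map_pow, ← map_neg,
      Subsingleton.elim (ι.comp _) (φ.comp (algebraMap ℚ A)), ← hom_eval₂, ← aeval_def,
      minpoly.aeval, map_zero]
  have hsum : IsSumSq c := by
    rw [← neg_neg c]
    refine isSumSq_neg_of_isRoot ?_ (fun i => ?_) hroot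
    · exact Polynomial.map_ne_zero (minpoly.ne_zero (Algebra.IsIntegral.isIntegral _))
    · rw [coeff_map, eq_ratCast]
      exact isSumSq_ratCast (coeff_minpoly_neg_sq_nonneg ha i)
  obtain ⟨s, rfl⟩ := hK.isSquare_of_isSumSq hsum
  rw [map_mul, ← sq] at hc
  rcases sq_eq_sq_iff_eq_or_eq_neg.1 hc with h | h
  · exact ⟨s, h⟩
  · exact ⟨-s, by rw [map_neg, h, neg_neg]⟩

end TotallyReal

section SquareRootClosures

open NumberField (maximalRealSubfield)

-- The default `ℚ`-algebra structure here is that of a characteristic zero division ring; it unfolds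
-- to the one of `AlgebraicClosure ℚ`, but not at the transparency of instance search.
instance isAlgClosure_algebraicClosure_rat : IsAlgClosure ℚ (AlgebraicClosure ℚ) :=
  ⟨inferInstance, AlgebraicClosure.isAlgebraic ℚ⟩

lemma isPythagorean_of_sqrt_one_add_sq_mem {K : Subfield ℝ} (hK : ∀ x ∈ K, √(1 + x ^ 2) ∈ K) :
    IsPythagorean K :=
  fun x => ⟨⟨√(1 + x ^ 2), hK x x.2⟩, Subtype.ext <|
    (Real.mul_self_sqrt (add_nonneg zero_le_one (sq_nonneg _))).symm⟩

lemma ofReal_sqrt_one_add_sq_sq (x : ℝ) : (√(1 + x ^ 2) : ℂ) ^ 2 = 1 + (x : ℂ) ^ 2 := by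
  exact_mod_cast Real.sq_sqrt (show 0 ≤ 1 + x ^ 2 by positivity)

lemma exists_sq_eq_and_apply_eq {A B : Type*} [Field A] [IsAlgClosed A] [CommRing B] [IsDomain B]
    (φ : A →+* B) {c : A} {w : B} (h : w ^ 2 = φ c) : ∃ b, b ^ 2 = c ∧ φ b = w := by
  obtain ⟨b, rfl⟩ := IsAlgClosed.exists_pow_nat_eq c two_pos
  rw [map_pow, sq_eq_sq_iff_eq_or_eq_neg] at h
  rcases h with rfl | rfl
  · exact ⟨b, rfl, rfl⟩
  · exact ⟨-b, neg_sq b, map_neg φ b⟩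

lemma MemFSqrtOneAddSq.memFSqrt {α : ℝ} (h : MemFSqrtOneAddSq α) : MemFSqrt (α : ℂ) := by
  refine fun L hL => h (L.comap Complex.ofRealHom) fun x hx => hL _ ?_
  rw [Complex.ofRealHom_eq_coe, ofReal_sqrt_one_add_sq_sq]
  exact L.add_mem L.one_mem (L.pow_mem hx 2)

lemma MemFSqrtOneAddSq.exists_mem_maximalRealSubfield {A : Type*} [Field A] [IsAlgClosed A]
    (φ : A →+* ℂ) {α : ℝ} (h : MemFSqrtOneAddSq α) : ∃ a ∈ maximalRealSubfield A, φ a = α := by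
  refine h (((maximalRealSubfield A).map φ).comap Complex.ofRealHom) ?_
  rintro x ⟨a, ha, hax : φ a = x⟩
  have hsq : (√(1 + x ^ 2) : ℂ) ^ 2 = φ (1 + a ^ 2) := by
    rw [ofReal_sqrt_one_add_sq_sq, map_add, map_one, map_pow, hax]
  obtain ⟨b, hb, hbx⟩ := exists_sq_eq_and_apply_eq φ hsq
  exact ⟨b, mem_maximalRealSubfield_of_sq_eq_one_add_sq ha hb, hbx⟩

lemma MemFSqrt.exists_mem_proPClosure {A : Type*} [Field A] [IsAlgClosed A] [Algebra ℚ A]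
    (φ : A →+* ℂ) {z : ℂ} (h : MemFSqrt z) : ∃ a ∈ proPClosure ℚ A 2, φ a = z := by
  refine h ((proPClosure ℚ A 2).toSubfield.map φ) ?_
  rintro w ⟨a, ha, haw⟩
  obtain ⟨b, rfl, hbw⟩ := exists_sq_eq_and_apply_eq φ haw.symm
  exact ⟨b, mem_proPClosure_two_of_sq_mem ha, hbw⟩

lemma MemFSqrtOneAddSq.isTotallyReal {α : ℝ} (h : MemFSqrtOneAddSq α) :
    IsTotallyReal (α : ℂ) := by
  let φ := (IsAlgClosed.lift : AlgebraicClosure ℚ →ₐ[ℚ] ℂ).toRingHom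
  obtain ⟨a, ha, hφ⟩ := h.exists_mem_maximalRealSubfield φ
  exact hφ ▸ (isTotallyReal_apply_iff φ).2 ha

lemma IsPythagorean.mem_fieldRange_of_isTotallyReal {K : Type*} [Field K] [LinearOrder K]
    [IsStrictOrderedRing K] (hK : IsPythagorean K) (ι : K →+* ℂ) {z : ℂ} (hsqrt : MemFSqrt z)
    (hreal : IsTotallyReal z) : z ∈ ι.fieldRange := by
  let φ := (IsAlgClosed.lift : AlgebraicClosure ℚ →ₐ[ℚ] ℂ).toRingHom
  obtain ⟨a, ha, rfl⟩ := hsqrt.exists_mem_proPClosure φ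
  let M : IntermediateField ℚ (AlgebraicClosure ℚ) :=
    (ι.fieldRange.comap φ).toIntermediateField fun q => by simp
  have hle : totallyRealField _ ⊓ proPClosure ℚ _ 2 ≤ M :=
    inf_proPClosure_two_le (fun σ x hx ψ => hx (ψ.comp σ)) fun y hy hyM =>
      hK.mem_fieldRange_of_sq_mem ι φ hy (map_pow φ y 2 ▸ hyM)
  exact hle ⟨(isTotallyReal_apply_iff φ).1 hreal, ha⟩

end SquareRootClosures

theorem memFSqrtOneAddSq_iff (α : ℝ) :
    MemFSqrtOneAddSq α ↔ MemFSqrt (α : ℂ) ∧ IsTotallyReal (α : ℂ) := by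
  constructor
  · exact fun h => ⟨h.memFSqrt, h.isTotallyReal⟩
  · rintro ⟨hsqrt, hreal⟩ K hK
    have hpyth := isPythagorean_of_sqrt_one_add_sq_mem hK
    obtain ⟨s, hs⟩ :=
      hpyth.mem_fieldRange_of_isTotallyReal (Complex.ofRealHom.comp K.subtype) hsqrt hreal
    exact Complex.ofReal_injective hs ▸ s.2
end

section
/- The real number √(2+√2) belongs to F_{√(1+x²)}, but the real number √(1+√2) does not belong to F_{√(1+x²)}. (Hence it is impossible by origami to construct a right triangle with hypotenuse √(2+√2) and one leg equal to 1.) -/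
/-!
Membership holds because `√2 = √(1 + 1²)` and `√(2 + √2) = √2 / 2 * √(1 + (1 + √2)²)`.

The totally real numbers form a field, because an algebraic number is totally real exactly when
every embedding of the algebraic numbers into `ℂ` sends it to a real number. This field is closed
under square roots of sums of two squares, hence it contains `F_{√(1+x²)}`. It does not contain
`√(1 + √2)`: the square of a totally real number has only nonnegative conjugates, whereas `1 - √2`
is a conjugate of `1 + √2`.
-/

open Polynomial

section Conjugates

variable {F : Type*} [Field F]

theorem isConjRoot_algebraMap_iff_exists_algHom {K Ω : Type*} [Field K] [Field Ω] [IsAlgClosed Ω]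
    [Algebra F K] [Algebra F Ω] [Algebra K Ω] [IsScalarTower F K Ω] [Algebra.IsAlgebraic F K]
    {a : K} {w : Ω} :
    IsConjRoot F (algebraMap K Ω a) w ↔ ∃ φ : K →ₐ[F] Ω, φ a = w := by
  have ha : IsIntegral F a := Algebra.IsIntegral.isIntegral a
  rw [isConjRoot_iff_mem_minpoly_rootSet ha.algebraMap,
    minpoly.algebraMap_eq (algebraMap K Ω).injective,
    ← Algebra.IsAlgebraic.range_eval_eq_rootSet_minpoly (K := K) Ω a]
  rfl

theorem isConjRoot_neg_of_sq_eq_algebraMap {E : Type*} [Field E] [Algebra F E] {x : E} {c : F}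
    (hx : x ^ 2 = algebraMap F E c) (hxF : x ∉ Set.range (algebraMap F E)) :
    IsConjRoot F x (-x) := by
  have hirr : Irreducible (X ^ 2 - C c) := by
    refine X_pow_sub_C_irreducible_of_prime Nat.prime_two fun b hb ↦ hxF ?_
    rw [← hb, map_pow] at hx
    obtain h | h := sq_eq_sq_iff_eq_or_eq_neg.mp hx
    · exact ⟨b, h.symm⟩
    · exact ⟨-b, by rw [map_neg, h]⟩
  have hmonic : (X ^ 2 - C c).Monic := monic_X_pow_sub_C c two_ne_zero
  have hroot : aeval x (X ^ 2 - C c) = 0 := by simp [hx]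
  refine isConjRoot_of_aeval_eq_zero ⟨_, hmonic, hroot⟩ ?_
  rw [← minpoly.eq_of_irreducible_of_monic hirr hroot hmonic]
  simp [hx]

end Conjugates

section TotallyReal

theorem isTotallyReal_algebraMap_iff {K : Type*} [Field K] [Algebra ℚ K] [Algebra.IsAlgebraic ℚ K]
    [Algebra K ℂ] {a : K} :
    IsTotallyReal (algebraMap K ℂ a) ↔ a ∈ NumberField.maximalRealSubfield K := by
  have ha : IsAlgebraic ℚ (algebraMap K ℂ a) := (Algebra.IsAlgebraic.isAlgebraic a).algebraMap
  simp only [IsTotallyReal, ha, true_and, ← isConjRoot_iff_aeval_eq_zero ha.isIntegral,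
    isConjRoot_algebraMap_iff_exists_algHom, forall_exists_index, forall_apply_eq_imp_iff,
    NumberField.mem_maximalRealSubfield_iff, Complex.star_def, Complex.conj_eq_iff_im]
  exact ⟨fun h φ ↦ h φ.toRatAlgHom, fun h φ ↦ h φ.toRingHom⟩

-- `algebraicClosure.isAlgebraic` itself is not found: it is about the algebra structure of an
-- intermediate field, whereas instance search over `ℚ` arrives at `DivisionRing.toRatAlgebra`.
local instance : Algebra.IsAlgebraic ℚ (algebraicClosure ℚ ℂ) :=
  algebraicClosure.isAlgebraic ℚ ℂ

/-- The field of totally real numbers: those algebraic numbers which every embedding of the field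
of algebraic numbers into `ℂ` sends to a real number. -/
noncomputable def totallyRealSubfield : Subfield ℂ :=
  (NumberField.maximalRealSubfield (algebraicClosure ℚ ℂ)).map (algebraMap _ ℂ)

theorem mem_totallyRealSubfield {z : ℂ} : z ∈ totallyRealSubfield ↔ IsTotallyReal z := by
  constructor
  · rintro ⟨a, ha, rfl⟩
    exact isTotallyReal_algebraMap_iff.mpr ha
  · intro hz
    lift z to algebraicClosure ℚ ℂ using mem_algebraicClosure_iff.mpr hz.1
    exact ⟨z, isTotallyReal_algebraMap_iff.mp hz, rfl⟩

namespace IsTotallyReal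

open scoped ComplexOrder

theorem sq_map_nonneg {K : Type*} [Field K] [Algebra ℚ K] [Algebra.IsAlgebraic ℚ K] [Algebra K ℂ]
    {a : K} (ha : IsTotallyReal (algebraMap K ℂ a)) (φ : K →+* ℂ) : 0 ≤ φ a ^ 2 :=
  Complex.sq_nonneg_iff.mpr (Complex.conj_eq_iff_im.mp (isTotallyReal_algebraMap_iff.mp ha φ))

theorem of_sq_eq_add_sq {u v w : ℂ} (hu : IsTotallyReal u) (hv : IsTotallyReal v)
    (hw : w ^ 2 = u ^ 2 + v ^ 2) : IsTotallyReal w := by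
  have hw_alg : IsAlgebraic ℚ w :=
    IsAlgebraic.of_pow two_pos (hw ▸ (hu.1.pow 2).add (hv.1.pow 2))
  lift u to algebraicClosure ℚ ℂ using mem_algebraicClosure_iff.mpr hu.1
  lift v to algebraicClosure ℚ ℂ using mem_algebraicClosure_iff.mpr hv.1
  lift w to algebraicClosure ℚ ℂ using mem_algebraicClosure_iff.mpr hw_alg
  refine (isTotallyReal_algebraMap_iff (K := algebraicClosure ℚ ℂ)).mpr fun φ ↦ ?_
  have hφ : φ w ^ 2 = φ u ^ 2 + φ v ^ 2 := by
    simpa only [map_add, map_pow] using congrArg φ (Subtype.ext hw : w ^ 2 = u ^ 2 + v ^ 2)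
  rw [Complex.star_def, Complex.conj_eq_iff_im, ← Complex.sq_nonneg_iff, hφ]
  exact add_nonneg (hu.sq_map_nonneg φ) (hv.sq_map_nonneg φ)

theorem nonneg_of_isConjRoot_sq {z w : ℂ} (hz : IsTotallyReal z) (hw : IsConjRoot ℚ (z ^ 2) w) :
    0 ≤ w := by
  lift z to algebraicClosure ℚ ℂ using mem_algebraicClosure_iff.mpr hz.1
  obtain ⟨φ, rfl⟩ :=
    (isConjRoot_algebraMap_iff_exists_algHom (K := algebraicClosure ℚ ℂ) (a := z ^ 2)).mp hw
  rw [map_pow]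
  exact hz.sq_map_nonneg φ.toRingHom

end IsTotallyReal

theorem MemFSqrtOneAddSq.isTotallyReal_s18 {x : ℝ} (hx : MemFSqrtOneAddSq x) :
    IsTotallyReal x := by
  suffices x ∈ totallyRealSubfield.comap Complex.ofRealHom from mem_totallyRealSubfield.mp this
  refine hx _ fun y hy ↦ mem_totallyRealSubfield.mpr ?_
  have h_one : IsTotallyReal 1 := mem_totallyRealSubfield.mp (one_mem _)
  refine h_one.of_sq_eq_add_sq (mem_totallyRealSubfield.mp hy) ?_
  rw [← map_pow, Real.sq_sqrt (by positivity)]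
  simp

theorem isConjRoot_one_add_sqrt_two : IsConjRoot ℚ (1 + √2 : ℂ) (1 - √2 : ℂ) := by
  have h_sq : (√2 : ℂ) ^ 2 = algebraMap ℚ ℂ 2 := by
    rw [← Complex.ofReal_pow, Real.sq_sqrt zero_le_two]
    simp
  have h_irrational : (√2 : ℂ) ∉ Set.range (algebraMap ℚ ℂ) := by
    rintro ⟨q, hq⟩
    exact irrational_sqrt_two ⟨q, by simpa using congrArg Complex.re hq⟩
  simpa [add_comm, sub_eq_add_neg] using
    (isConjRoot_neg_of_sq_eq_algebraMap h_sq h_irrational).add_algebraMap 1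

theorem not_isTotallyReal_sqrt_one_add_sqrt_two : ¬ IsTotallyReal (√(1 + √2) : ℝ) := by
  intro h
  have h_sq : (√(1 + √2) : ℂ) ^ 2 = 1 + √2 := by
    rw [← Complex.ofReal_pow, Real.sq_sqrt (by positivity)]
    simp
  have h_nonneg : (0 : ℝ) ≤ 1 - √2 := by
    exact_mod_cast h.nonneg_of_isConjRoot_sq (h_sq ▸ isConjRoot_one_add_sqrt_two)
  linarith [Real.one_lt_sqrt_two]

end TotallyReal

theorem sqrt_two_add_sqrt_two_eq : √(2 + √2) = √2 / 2 * √(1 + (1 + √2) ^ 2) := by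
  have h_sq : √2 ^ 2 = 2 := Real.sq_sqrt zero_le_two
  calc √(2 + √2) = √((√2 / 2) ^ 2 * (1 + (1 + √2) ^ 2)) := by
        rw [div_pow, h_sq]
        congr 1
        linear_combination -h_sq / 2
    _ = √2 / 2 * √(1 + (1 + √2) ^ 2) := by
        rw [Real.sqrt_mul (sq_nonneg _), Real.sqrt_sq (by positivity)]

theorem memFSqrtOneAddSq_sqrt_two_add_sqrt_two : MemFSqrtOneAddSq √(2 + √2) := by
  intro K hK
  have h_sqrt_two : √2 ∈ K := by
    simpa [one_add_one_eq_two] using hK 1 K.one_mem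
  rw [sqrt_two_add_sqrt_two_eq]
  exact K.mul_mem (K.div_mem h_sqrt_two (ofNat_mem K 2)) (hK _ (K.add_mem K.one_mem h_sqrt_two))

theorem sqrt_two_add_sqrt_two_mem_and_sqrt_one_add_sqrt_two_not_mem :
    MemFSqrtOneAddSq (Real.sqrt (2 + Real.sqrt 2)) ∧
      ¬ MemFSqrtOneAddSq (Real.sqrt (1 + Real.sqrt 2)) :=
  ⟨memFSqrtOneAddSq_sqrt_two_add_sqrt_two,
    fun h ↦ not_isTotallyReal_sqrt_one_add_sqrt_two h.isTotallyReal_s18⟩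
end
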